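/- There exist constants ρ > 0 and c_ρ > 0 such that for all sufficiently large x: #{p ≤ (log x)^{1+ρ} : p prime, P⁺(p − 1) ≤ log x} > c_ρ · (log x)^{1+ρ}/log log x. -/

import Mathlib

open Real Finset

attribute [local instance] Classical.propDecidable

/-- `Pplus n` is the largest prime factor of `n`, with the convention `Pplus 1 = 1`. -/
noncomputable def Pplus (n : ℕ) : ℕ := if n = 1 then 1 else n.primeFactors.sup id

/-!
Let `y = log x` and `z = y ^ (1 + ρ)`. A prime `p ≤ z` such that `p - 1` has a prime factor `q > y`
has the form `p = m q + 1` with `m` even and `m ≤ z / y = y ^ ρ`. For fixed `m`, Selberg's sieve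
applied to the polynomial `X (m X + 1)` shows that there are
`O((z / m) (σ(m) / m) / log² y)` such `q`. Since `∑_{m ≤ M} σ(m) / m² = O(1 + log M)`, summing over
`m ≤ y ^ ρ` leaves `O(ρ z / log y)` such primes `p` for large `y`. When `ρ` is small this is a small
fraction of Chebyshev's lower bound for the number of all primes up to `z`.

The factor `σ(m) / m` comes from the roots of `X (m X + 1)` modulo a squarefree `n`, at least one
for each divisor of `n` coprime to `m`: the sum over `n ≤ l²` of their densities is bounded below,
up to a constant, by `∑ 1 / a * ∑ 1 / b` over squarefree `a, b ≤ l` with `b` coprime to `m`, and the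
second factor is at least `m / σ(m)` times the first.
-/

section SelbergSieve

open BoundingSieve
open scoped ArithmeticFunction.Moebius

theorem sum_divisors_filter_dvd_moebius {l m : ℕ} (hm : Squarefree m) :
    ∑ d ∈ m.divisors with l ∣ d, μ d = if l = m then μ l else 0 := by
  by_cases hlm : l ∣ m
  swap
  · rw [if_neg fun h ↦ hlm (dvd_of_eq h)]
    refine sum_eq_zero fun d hd ↦ ?_
    obtain ⟨hdm, hld⟩ := mem_filter.1 hd
    exact absurd (hld.trans (Nat.dvd_of_mem_divisors hdm)) hlm
  obtain ⟨k, rfl⟩ := hlm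
  have hl : l ≠ 0 := left_ne_zero_of_mul hm.ne_zero
  have hmultiples : {d ∈ (l * k).divisors | l ∣ d} = k.divisors.image (l * ·) := by
    ext d
    simp only [mem_filter, mem_image, Nat.mem_divisors, hm.ne_zero, ne_eq, not_false_eq_true,
      and_true, right_ne_zero_of_mul hm.ne_zero]
    constructor
    · rintro ⟨hd, e, rfl⟩
      exact ⟨e, Nat.dvd_of_mul_dvd_mul_left (Nat.pos_of_ne_zero hl) hd, rfl⟩
    · rintro ⟨e, he, rfl⟩
      exact ⟨mul_dvd_mul_left l he, dvd_mul_right l e⟩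
  have hmul : ∀ e ∈ k.divisors, μ (l * e) = μ l * μ e := fun e he ↦
    ArithmeticFunction.isMultiplicative_moebius.map_mul_of_coprime
      ((Nat.coprime_of_squarefree_mul hm).coprime_dvd_right (Nat.dvd_of_mem_divisors he))
  rw [hmultiples, sum_image fun a _ b _ ↦ Nat.eq_of_mul_eq_mul_left (Nat.pos_of_ne_zero hl),
    sum_congr rfl hmul, ← mul_sum, ← ArithmeticFunction.coe_zeta_mul_apply,
    ArithmeticFunction.coe_zeta_mul_moebius, ArithmeticFunction.one_apply]
  simp [hl]

theorem nu_le_selbergTerms {s : BoundingSieve} {d : ℕ} (hd : d ∣ s.prodPrimes) :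
    s.nu d ≤ s.selbergTerms d := by
  rw [selbergTerms_apply]
  refine le_mul_of_one_le_right (nu_pos_of_dvd_prodPrimes hd).le (one_le_prod fun p hp ↦ ?_)
  have hp_prime := Nat.prime_of_mem_primeFactors hp
  have hpP := (Nat.dvd_of_mem_primeFactors hp).trans hd
  exact (one_le_inv₀ (sub_pos.2 (s.nu_lt_one_of_prime p hp_prime hpP))).2
    (sub_le_self 1 (s.nu_pos_of_prime p hp_prime hpP).le)

variable (s : SelbergSieve)

/-- The sifting moduli `d` with `d ≤ √level`, on which Selberg's weights are supported. -/
noncomputable def selbergDivisors : Finset ℕ :=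
  {d ∈ s.prodPrimes.divisors | (d : ℝ) ^ 2 ≤ s.level}

/-- The sum `S = ∑ g(d)` over `d ∣ P`, `d ≤ √level`, whose inverse is the minimum of the main term
of the `Λ²` sieve. -/
noncomputable def selbergSum : ℝ := ∑ d ∈ selbergDivisors s, s.selbergTerms d

/-- Selberg's optimal weights `λ_d = μ(d) / ν(d) * S⁻¹ * ∑_{d ∣ m} g(m)`. -/
noncomputable def selbergWeights (d : ℕ) : ℝ :=
  μ d * (s.nu d)⁻¹ * ((∑ m ∈ selbergDivisors s with d ∣ m, s.selbergTerms m) / selbergSum s)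

variable {s}

theorem selbergDivisors_subset_divisors : selbergDivisors s ⊆ s.prodPrimes.divisors :=
  filter_subset _ _

theorem dvd_prodPrimes_of_mem_selbergDivisors {d : ℕ} (hd : d ∈ selbergDivisors s) :
    d ∣ s.prodPrimes :=
  Nat.dvd_of_mem_divisors (selbergDivisors_subset_divisors hd)

theorem one_mem_selbergDivisors : 1 ∈ selbergDivisors s :=
  mem_filter.2 ⟨Nat.one_mem_divisors.2 prodPrimes_ne_zero, by simpa using s.one_le_level⟩

theorem mem_selbergDivisors_of_dvd {d m : ℕ} (hdm : d ∣ m) (hm : m ∈ selbergDivisors s) :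
    d ∈ selbergDivisors s := by
  obtain ⟨hmP, hmlevel⟩ := mem_filter.1 hm
  have hdm_le : (d : ℝ) ≤ m := by
    exact_mod_cast Nat.le_of_dvd (Nat.pos_of_mem_divisors hmP) hdm
  refine mem_filter.2 ⟨Nat.mem_divisors.2 ⟨hdm.trans (Nat.dvd_of_mem_divisors hmP),
    prodPrimes_ne_zero⟩, le_trans ?_ hmlevel⟩
  gcongr

theorem selbergTerms_pos_of_mem_selbergDivisors {d : ℕ} (hd : d ∈ selbergDivisors s) :
    0 < s.selbergTerms d :=
  selbergTerms_pos (dvd_prodPrimes_of_mem_selbergDivisors hd)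

theorem selbergSum_pos : 0 < selbergSum s :=
  sum_pos (fun _ ↦ selbergTerms_pos_of_mem_selbergDivisors) ⟨1, one_mem_selbergDivisors⟩

theorem selbergWeights_one : selbergWeights s 1 = 1 := by
  have hS : ∑ m ∈ selbergDivisors s with 1 ∣ m, s.selbergTerms m = selbergSum s := by
    simp only [one_dvd, filter_true, selbergSum]
  rw [selbergWeights, hS, div_self selbergSum_pos.ne', s.nu_mult.map_one,
    ArithmeticFunction.moebius_apply_one, Int.cast_one, inv_one, mul_one, mul_one]

theorem selbergWeights_eq_zero {d : ℕ} (hd : d ∉ selbergDivisors s) : selbergWeights s d = 0 := by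
  have hnone : {m ∈ selbergDivisors s | d ∣ m} = ∅ :=
    filter_eq_empty_iff.2 fun _ hm hdm ↦ hd (mem_selbergDivisors_of_dvd hdm hm)
  rw [selbergWeights, hnone, sum_empty, zero_div, mul_zero]

theorem abs_selbergWeights_le {d : ℕ} (hd : d ∣ s.prodPrimes) :
    |selbergWeights s d| ≤ (s.nu d)⁻¹ := by
  have hterms : ∀ m ∈ selbergDivisors s, 0 ≤ s.selbergTerms m := fun m hm ↦
    (selbergTerms_pos_of_mem_selbergDivisors hm).le
  have hmu : |(μ d : ℝ)| ≤ 1 := by exact_mod_cast ArithmeticFunction.abs_moebius_le_one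
  have hratio_nonneg :
      0 ≤ (∑ m ∈ selbergDivisors s with d ∣ m, s.selbergTerms m) / selbergSum s :=
    div_nonneg (sum_nonneg fun m hm ↦ hterms m (mem_filter.1 hm).1) selbergSum_pos.le
  have hratio_le : (∑ m ∈ selbergDivisors s with d ∣ m, s.selbergTerms m) / selbergSum s ≤ 1 :=
    div_le_one_of_le₀ (sum_le_sum_of_subset_of_nonneg (filter_subset _ _) fun m hm _ ↦ hterms m hm)
      selbergSum_pos.le
  have hnu : 0 < (s.nu d)⁻¹ := inv_pos.2 (nu_pos_of_dvd_prodPrimes hd)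
  rw [selbergWeights, abs_mul, abs_mul, abs_of_pos hnu, abs_of_nonneg hratio_nonneg]
  calc |(μ d : ℝ)| * (s.nu d)⁻¹ * _ ≤ 1 * (s.nu d)⁻¹ * 1 := by gcongr
    _ = (s.nu d)⁻¹ := by ring

theorem sum_nu_mul_selbergWeights (l : ℕ) :
    ∑ d ∈ s.prodPrimes.divisors with l ∣ d, s.nu d * selbergWeights s d =
      if l ∈ selbergDivisors s then μ l * s.selbergTerms l / selbergSum s else 0 := by
  have hdivisors : ∀ m ∈ selbergDivisors s,
      {d ∈ s.prodPrimes.divisors | l ∣ d ∧ d ∣ m} = {d ∈ m.divisors | l ∣ d} := by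
    intro m hm
    have hmP := dvd_prodPrimes_of_mem_selbergDivisors hm
    rw [← Nat.divisors_filter_dvd_of_dvd prodPrimes_ne_zero hmP, filter_filter]
    ext d
    simp only [mem_filter, and_comm (a := l ∣ d)]
  calc ∑ d ∈ s.prodPrimes.divisors with l ∣ d, s.nu d * selbergWeights s d
      = ∑ d ∈ s.prodPrimes.divisors with l ∣ d, ∑ m ∈ selbergDivisors s with d ∣ m,
          μ d * (s.selbergTerms m / selbergSum s) := by
        refine sum_congr rfl fun d hd ↦ ?_
        have hnu : s.nu d ≠ 0 := nu_ne_zero (Nat.dvd_of_mem_divisors (mem_filter.1 hd).1)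
        rw [selbergWeights, ← mul_sum, ← sum_div]
        field_simp
    _ = ∑ m ∈ selbergDivisors s, s.selbergTerms m / selbergSum s *
          ∑ d ∈ m.divisors with l ∣ d, (μ d : ℝ) := by
        simp_rw [mul_sum]
        refine (sum_comm' fun d m ↦ ?_).trans
          (sum_congr rfl fun m hm ↦ by simp only [← hdivisors m hm, mul_comm]; rfl)
        simp only [mem_filter]
        tauto
    _ = ∑ m ∈ selbergDivisors s, s.selbergTerms m / selbergSum s *
          if l = m then (μ l : ℝ) else 0 := by
        refine sum_congr rfl fun m hm ↦ ?_
        have hm_sqf := squarefree_of_dvd_prodPrimes (dvd_prodPrimes_of_mem_selbergDivisors hm)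
        exact congrArg _ (mod_cast sum_divisors_filter_dvd_moebius hm_sqf)
    _ = if l ∈ selbergDivisors s then μ l * s.selbergTerms l / selbergSum s else 0 := by
        simp only [mul_ite, mul_zero, sum_ite_eq]
        split_ifs <;> ring

theorem mainSum_lambdaSquared_selbergWeights :
    s.mainSum (lambdaSquared (selbergWeights s)) = (selbergSum s)⁻¹ := by
  have hterm : ∀ l ∈ selbergDivisors s,
      (s.selbergTerms l)⁻¹ * (μ l * s.selbergTerms l / selbergSum s) ^ 2 =
        s.selbergTerms l / selbergSum s ^ 2 := by
    intro l hl
    have hmu : (μ l : ℝ) ^ 2 = 1 := mod_cast ArithmeticFunction.moebius_sq_eq_one_of_squarefree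
      (squarefree_of_dvd_prodPrimes (dvd_prodPrimes_of_mem_selbergDivisors hl))
    have hg := (selbergTerms_pos_of_mem_selbergDivisors hl).ne'
    rw [div_pow, mul_pow, hmu]
    field_simp
  calc s.mainSum (lambdaSquared (selbergWeights s))
      = ∑ l ∈ s.prodPrimes.divisors, (s.selbergTerms l)⁻¹ *
          (∑ d ∈ s.prodPrimes.divisors with l ∣ d, s.nu d * selbergWeights s d) ^ 2 := by
        rw [mainSum_lambdaSquared_eq_sum_mul_sum_sq]
        simp only [sum_filter]
    _ = ∑ l ∈ selbergDivisors s,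
          (s.selbergTerms l)⁻¹ * (μ l * s.selbergTerms l / selbergSum s) ^ 2 := by
        simp only [sum_nu_mul_selbergWeights]
        refine (sum_subset_zero_on_sdiff selbergDivisors_subset_divisors ?_ ?_).symm
        · intro l hl
          rw [if_neg (mem_sdiff.1 hl).2, sq, zero_mul, mul_zero]
        · intro l hl
          rw [if_pos hl]
    _ = (selbergSum s)⁻¹ := by
        rw [sum_congr rfl hterm, ← sum_div, ← selbergSum]
        have := (selbergSum_pos (s := s)).ne'
        field_simp

theorem abs_lambdaSquared_mul_le (w : ℕ → ℝ) (d : ℕ) :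
    |lambdaSquared w d| * d ≤ ∑ d₁ ∈ d.divisors, ∑ d₂ ∈ d.divisors,
      if d = d₁.lcm d₂ then d₁ * |w d₁| * (d₂ * |w d₂|) else 0 := by
  have habs : |lambdaSquared w d| ≤
      ∑ d₁ ∈ d.divisors, ∑ d₂ ∈ d.divisors, if d = d₁.lcm d₂ then |w d₁| * |w d₂| else 0 := by
    refine (abs_sum_le_sum_abs _ _).trans (sum_le_sum fun d₁ _ ↦
      (abs_sum_le_sum_abs _ _).trans (sum_le_sum fun d₂ _ ↦ ?_))
    split_ifs <;> simp [abs_mul]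
  calc |lambdaSquared w d| * d
      ≤ (∑ d₁ ∈ d.divisors, ∑ d₂ ∈ d.divisors,
          if d = d₁.lcm d₂ then |w d₁| * |w d₂| else 0) * d := by gcongr
    _ = ∑ d₁ ∈ d.divisors, ∑ d₂ ∈ d.divisors,
          if d = d₁.lcm d₂ then |w d₁| * |w d₂| * d else 0 := by
        simp only [sum_mul, ite_mul, zero_mul]
    _ ≤ _ := by
        refine sum_le_sum fun d₁ hd₁ ↦ sum_le_sum fun d₂ hd₂ ↦ ?_
        split_ifs with h
        · have hlcm : (d : ℝ) ≤ d₁ * d₂ := by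
            have := Nat.lcm_le_mul (Nat.pos_of_mem_divisors hd₁) (Nat.pos_of_mem_divisors hd₂)
            exact_mod_cast h.le.trans this
          calc |w d₁| * |w d₂| * d ≤ |w d₁| * |w d₂| * (d₁ * d₂) := by gcongr
            _ = d₁ * |w d₁| * (d₂ * |w d₂|) := by ring
        · rfl

theorem errSum_lambdaSquared_le {s : BoundingSieve} (w : ℕ → ℝ)
    (hrem : ∀ d, d ∣ s.prodPrimes → |s.rem d| ≤ d) :
    s.errSum (lambdaSquared w) ≤ (∑ d ∈ s.prodPrimes.divisors, d * |w d|) ^ 2 := by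
  have hterm : ∀ d ∈ s.prodPrimes.divisors, |lambdaSquared w d| * |s.rem d| ≤
      ∑ d₁ ∈ s.prodPrimes.divisors, ∑ d₂ ∈ s.prodPrimes.divisors,
        if d = d₁.lcm d₂ then d₁ * |w d₁| * (d₂ * |w d₂|) else 0 := by
    intro d hd
    have hdP := Nat.dvd_of_mem_divisors hd
    have hsub := Nat.divisors_subset_of_dvd prodPrimes_ne_zero hdP
    have hnonneg (d₁ d₂ : ℕ) :
        0 ≤ if d = d₁.lcm d₂ then d₁ * |w d₁| * (d₂ * |w d₂|) else 0 := by positivity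
    calc |lambdaSquared w d| * |s.rem d| ≤ |lambdaSquared w d| * d := by
          gcongr
          exact hrem d hdP
      _ ≤ _ := abs_lambdaSquared_mul_le w d
      _ ≤ _ := sum_le_sum fun d₁ _ ↦
          sum_le_sum_of_subset_of_nonneg hsub fun d₂ _ _ ↦ hnonneg d₁ d₂
      _ ≤ _ := sum_le_sum_of_subset_of_nonneg hsub fun d₁ _ _ ↦
          sum_nonneg fun d₂ _ ↦ hnonneg d₁ d₂
  calc s.errSum (lambdaSquared w)
      ≤ ∑ d ∈ s.prodPrimes.divisors, ∑ d₁ ∈ s.prodPrimes.divisors, ∑ d₂ ∈ s.prodPrimes.divisors,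
          if d = d₁.lcm d₂ then d₁ * |w d₁| * (d₂ * |w d₂|) else 0 := sum_le_sum hterm
    _ = ∑ d₁ ∈ s.prodPrimes.divisors, ∑ d₂ ∈ s.prodPrimes.divisors,
          d₁ * |w d₁| * (d₂ * |w d₂|) := by
        rw [sum_comm]
        refine sum_congr rfl fun d₁ hd₁ ↦ ?_
        rw [sum_comm]
        refine sum_congr rfl fun d₂ hd₂ ↦ ?_
        have hlcm : d₁.lcm d₂ ∈ s.prodPrimes.divisors := Nat.mem_divisors.2
          ⟨Nat.lcm_dvd (Nat.dvd_of_mem_divisors hd₁) (Nat.dvd_of_mem_divisors hd₂),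
            prodPrimes_ne_zero⟩
        rw [sum_ite_eq', if_pos hlcm]
    _ = (∑ d ∈ s.prodPrimes.divisors, d * |w d|) ^ 2 := by rw [sq, sum_mul_sum]

theorem siftedSum_le_div_selbergSum_add (hrem : ∀ d, d ∣ s.prodPrimes → |s.rem d| ≤ d) :
    s.siftedSum ≤ s.totalMass / selbergSum s +
      (∑ d ∈ selbergDivisors s, d * (s.nu d)⁻¹) ^ 2 := by
  have hweights : ∑ d ∈ s.prodPrimes.divisors, d * |selbergWeights s d| ≤
      ∑ d ∈ selbergDivisors s, d * (s.nu d)⁻¹ := by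
    rw [← sum_subset selbergDivisors_subset_divisors fun d _ hd ↦ by
      rw [selbergWeights_eq_zero hd, abs_zero, mul_zero]]
    gcongr with d hd
    exact abs_selbergWeights_le (dvd_prodPrimes_of_mem_selbergDivisors hd)
  calc s.siftedSum ≤ s.totalMass * s.mainSum (lambdaSquared (selbergWeights s)) +
        s.errSum (lambdaSquared (selbergWeights s)) :=
        siftedSum_le_mainSum_errSum_of_upperMoebius _
          (upperMoebius_lambdaSquared _ selbergWeights_one)
    _ ≤ s.totalMass / selbergSum s + (∑ d ∈ selbergDivisors s, d * (s.nu d)⁻¹) ^ 2 := by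
        rw [mainSum_lambdaSquared_selbergWeights, ← div_eq_mul_inv]
        gcongr
        exact (errSum_lambdaSquared_le _ hrem).trans (by gcongr)

end SelbergSieve

section PolynomialSieve

open Polynomial

theorem eval_modEq_eval (f : ℕ[X]) {a b n : ℕ} (h : a ≡ b [MOD n]) :
    f.eval a ≡ f.eval b [MOD n] := by
  have hcast : (a : ZMod n) = b := (ZMod.natCast_eq_natCast_iff _ _ _).2 h
  refine (ZMod.natCast_eq_natCast_iff _ _ _).1 ?_
  simp only [eval_eq_sum, Polynomial.sum, Nat.cast_sum, Nat.cast_mul, Nat.cast_pow, hcast]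

theorem dvd_eval_iff_of_modEq (f : ℕ[X]) {a b n : ℕ} (h : a ≡ b [MOD n]) :
    n ∣ f.eval a ↔ n ∣ f.eval b :=
  (eval_modEq_eval f h).dvd_iff dvd_rfl

/-- The number of roots of `f` modulo `n`. -/
def rootCount (f : ℕ[X]) (n : ℕ) : ℕ := #{k ∈ range n | n ∣ f.eval k}

theorem rootCount_le (f : ℕ[X]) (n : ℕ) : rootCount f n ≤ n :=
  (card_filter_le _ _).trans_eq (card_range n)

theorem rootCount_mul (f : ℕ[X]) {m n : ℕ} (hm : m ≠ 0) (hn : n ≠ 0) (hmn : m.Coprime n) :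
    rootCount f (m * n) = rootCount f m * rootCount f n := by
  rw [rootCount, rootCount, rootCount, ← card_product]
  refine card_nbij (fun k ↦ (k % m, k % n)) (fun k hk ↦ ?_) (fun j hj k hk hjk ↦ ?_)
    fun x hx ↦ ?_
  · obtain ⟨-, hk⟩ := mem_filter.1 hk
    exact mem_product.2 ⟨mem_filter.2 ⟨mem_range.2 (Nat.mod_lt _ (Nat.pos_of_ne_zero hm)),
        (dvd_eval_iff_of_modEq f (Nat.mod_modEq k m)).2 (dvd_of_mul_right_dvd hk)⟩,
      mem_filter.2 ⟨mem_range.2 (Nat.mod_lt _ (Nat.pos_of_ne_zero hn)),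
        (dvd_eval_iff_of_modEq f (Nat.mod_modEq k n)).2 (dvd_of_mul_left_dvd hk)⟩⟩
  · have hmod : j ≡ k [MOD m * n] := (Nat.modEq_and_modEq_iff_modEq_mul hmn).1 (Prod.ext_iff.1 hjk)
    exact hmod.eq_of_lt_of_lt (mem_range.1 (mem_filter.1 hj).1) (mem_range.1 (mem_filter.1 hk).1)
  · simp only [coe_product, Set.mem_prod, mem_coe, mem_filter, mem_range] at hx
    obtain ⟨⟨hx₁, hroot₁⟩, hx₂, hroot₂⟩ := hx
    obtain ⟨k, hk₁, hk₂⟩ := Nat.chineseRemainder hmn x.1 x.2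
    have hmod₁ : k % (m * n) ≡ x.1 [MOD m] := ((Nat.mod_modEq k _).of_mul_right n).trans hk₁
    have hmod₂ : k % (m * n) ≡ x.2 [MOD n] := ((Nat.mod_modEq k _).of_mul_left m).trans hk₂
    refine ⟨k % (m * n), mem_filter.2 ⟨mem_range.2 (Nat.mod_lt _ (by positivity)), ?_⟩,
      Prod.ext (Eq.trans hmod₁ (Nat.mod_eq_of_lt hx₁)) (Eq.trans hmod₂ (Nat.mod_eq_of_lt hx₂))⟩
    exact hmn.mul_dvd_of_dvd_of_dvd ((dvd_eval_iff_of_modEq f hmod₁).2 hroot₁)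
      ((dvd_eval_iff_of_modEq f hmod₂).2 hroot₂)

/-- The arithmetic function `n ↦ rootCount f n / n`, the density of `{k | n ∣ f(k)}`. -/
noncomputable def rootDensity (f : ℕ[X]) : ArithmeticFunction ℝ :=
  ⟨fun n ↦ rootCount f n / n, by rw [Nat.cast_zero, div_zero]⟩

theorem rootDensity_apply (f : ℕ[X]) (n : ℕ) : rootDensity f n = rootCount f n / n := rfl

theorem isMultiplicative_rootDensity (f : ℕ[X]) : (rootDensity f).IsMultiplicative := by
  refine ArithmeticFunction.IsMultiplicative.iff_ne_zero.2 ⟨?_, fun {m n} hm hn hmn ↦ ?_⟩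
  · simp [rootDensity_apply, rootCount]
  · simp only [rootDensity_apply, rootCount_mul f hm hn hmn, Nat.cast_mul, mul_div_mul_comm]

theorem abs_card_range_modEq_sub_le {d : ℕ} (hd : d ≠ 0) (r K : ℕ) :
    |(#{k ∈ range K | k ≡ r [MOD d]} : ℝ) - K / d| ≤ 1 := by
  have hd' : (0 : ℝ) < d := mod_cast Nat.pos_of_ne_zero hd
  have hcount := Nat.count_modEq_card K (Nat.pos_of_ne_zero hd) r
  have hK : (K : ℝ) / d = (K / d : ℕ) + (K % d : ℕ) / d := by
    rw [div_eq_iff hd'.ne', add_mul, div_mul_cancel₀ _ hd'.ne']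
    exact_mod_cast (Nat.div_add_mod' K d).symm
  have hmod : ((K % d : ℕ) : ℝ) / d < 1 :=
    (div_lt_one hd').2 (mod_cast Nat.mod_lt _ (Nat.pos_of_ne_zero hd))
  have hmod_nonneg : 0 ≤ ((K % d : ℕ) : ℝ) / d := by positivity
  rw [Nat.count_eq_card_filter_range] at hcount
  rw [hcount, hK, Nat.cast_add, add_sub_add_left_eq_sub]
  split_ifs <;> simp only [Nat.cast_one, Nat.cast_zero, abs_le] <;> constructor <;> linarith

theorem card_range_dvd_eval (f : ℕ[X]) {d : ℕ} (hd : d ≠ 0) (K : ℕ) :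
    #{k ∈ range K | d ∣ f.eval k} =
      ∑ r ∈ range d with d ∣ f.eval r, #{k ∈ range K | k ≡ r [MOD d]} := by
  have hmaps : ∀ k ∈ {k ∈ range K | d ∣ f.eval k}, k % d ∈ {r ∈ range d | d ∣ f.eval r} :=
    fun k hk ↦ mem_filter.2 ⟨mem_range.2 (Nat.mod_lt _ (Nat.pos_of_ne_zero hd)),
      (dvd_eval_iff_of_modEq f (Nat.mod_modEq k d)).2 (mem_filter.1 hk).2⟩
  rw [card_eq_sum_card_fiberwise hmaps]
  refine sum_congr rfl fun r hr ↦ ?_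
  obtain ⟨hr, hroot⟩ := mem_filter.1 hr
  congr 1
  ext k
  simp only [mem_filter, and_assoc, and_congr_right_iff]
  refine fun _ ↦ ⟨fun h ↦ ?_, fun h ↦ ⟨(dvd_eval_iff_of_modEq f h).2 hroot, ?_⟩⟩
  · exact h.2 ▸ (Nat.mod_modEq k d).symm
  · exact Eq.trans h (Nat.mod_eq_of_lt (mem_range.1 hr))

theorem abs_card_range_dvd_eval_sub_le (f : ℕ[X]) {d : ℕ} (hd : d ≠ 0) (K : ℕ) :
    |(#{k ∈ range K | d ∣ f.eval k} : ℝ) - rootDensity f d * K| ≤ d := by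
  have hmain : rootDensity f d * K = ∑ r ∈ range d with d ∣ f.eval r, (K : ℝ) / d := by
    rw [sum_const, nsmul_eq_mul, rootDensity_apply, rootCount, div_mul_eq_mul_div, mul_div_assoc]
  rw [card_range_dvd_eval f hd, hmain, Nat.cast_sum, ← sum_sub_distrib]
  calc |∑ r ∈ range d with d ∣ f.eval r, ((#{k ∈ range K | k ≡ r [MOD d]} : ℝ) - K / d)|
      ≤ ∑ r ∈ range d with d ∣ f.eval r, (1 : ℝ) := (abs_sum_le_sum_abs _ _).trans
        (sum_le_sum fun r _ ↦ abs_card_range_modEq_sub_le hd r K)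
    _ = rootCount f d := by rw [sum_const, nsmul_one, rootCount]
    _ ≤ d := mod_cast rootCount_le f d

theorem mul_inv_rootDensity_le (f : ℕ[X]) (d : ℕ) : d * (rootDensity f d)⁻¹ ≤ (d : ℝ) ^ 2 := by
  rw [rootDensity_apply, inv_div, ← mul_div_assoc, ← sq]
  obtain hcount | hcount := (rootCount f d).eq_zero_or_pos
  · rw [hcount, Nat.cast_zero, div_zero]
    positivity
  · exact div_le_self (by positivity) (mod_cast hcount)

theorem sum_divisors_mul_inv_rootDensity_le (f : ℕ[X]) (n z : ℕ) :
    ∑ d ∈ n.divisors with d ≤ z, d * (rootDensity f d)⁻¹ ≤ (z : ℝ) ^ 3 := by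
  have hcard : #{d ∈ n.divisors | d ≤ z} ≤ z := by
    refine (card_le_card fun d hd ↦ ?_).trans_eq (Nat.card_Icc 1 z)
    obtain ⟨hd, hdz⟩ := mem_filter.1 hd
    exact mem_Icc.2 ⟨Nat.pos_of_mem_divisors hd, hdz⟩
  calc ∑ d ∈ n.divisors with d ≤ z, d * (rootDensity f d)⁻¹
      ≤ ∑ d ∈ n.divisors with d ≤ z, (z : ℝ) ^ 2 := sum_le_sum fun d hd ↦
        (mul_inv_rootDensity_le f d).trans (by have := (mem_filter.1 hd).2; gcongr)
    _ = #{d ∈ n.divisors | d ≤ z} * (z : ℝ) ^ 2 := by rw [sum_const, nsmul_eq_mul]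
    _ ≤ z * (z : ℝ) ^ 2 := by gcongr
    _ = z ^ 3 := by ring

theorem sum_image_ite_card_fiber {ι α : Type*} [DecidableEq α] (t : Finset ι) (g : ι → α)
    (q : α → Prop) [DecidablePred q] :
    ∑ v ∈ t.image g, (if q v then (#{k ∈ t | g k = v} : ℝ) else 0) = #{k ∈ t | q (g k)} := by
  rw [card_eq_sum_ones, sum_filter, Nat.cast_sum,
    sum_comp fun v ↦ ((if q v then 1 else 0 : ℕ) : ℝ)]
  refine sum_congr rfl fun v _ ↦ ?_
  split_ifs <;> simp

/-- The Selberg sieve that removes from the values `f(0), …, f(K - 1)`, counted with multiplicity,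
those sharing a factor with `P`. -/
noncomputable def polynomialSieve (f : ℕ[X]) (K : ℕ) {P : ℕ} (hP : Squarefree P)
    (hroots : ∀ p, p.Prime → p ∣ P → rootCount f p ∈ Set.Ioo 0 p) {level : ℝ}
    (hlevel : 1 ≤ level) : SelbergSieve where
  support := (range K).image f.eval
  prodPrimes := P
  prodPrimes_squarefree := hP
  weights v := #{k ∈ range K | f.eval k = v}
  weights_nonneg _ := Nat.cast_nonneg _
  totalMass := K
  nu := rootDensity f
  nu_mult := isMultiplicative_rootDensity f
  nu_pos_of_prime p hp hpP := div_pos (mod_cast (hroots p hp hpP).1) (mod_cast hp.pos)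
  nu_lt_one_of_prime p hp hpP :=
    (div_lt_one (mod_cast hp.pos)).2 (mod_cast (hroots p hp hpP).2)
  level := level
  one_le_level := hlevel

section

variable (f : ℕ[X]) (K : ℕ) {P : ℕ} (hP : Squarefree P)
  (hroots : ∀ p, p.Prime → p ∣ P → rootCount f p ∈ Set.Ioo 0 p) {level : ℝ} (hlevel : 1 ≤ level)

theorem siftedSum_polynomialSieve : (polynomialSieve f K hP hroots hlevel).siftedSum =
    #{k ∈ range K | P.Coprime (f.eval k)} :=
  sum_image_ite_card_fiber _ _ _

theorem abs_rem_polynomialSieve_le {d : ℕ} (hd : d ≠ 0) :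
    |(polynomialSieve f K hP hroots hlevel).rem d| ≤ d := by
  have hmult : (polynomialSieve f K hP hroots hlevel).multSum d = #{k ∈ range K | d ∣ f.eval k} :=
    sum_image_ite_card_fiber _ _ _
  rw [BoundingSieve.rem, hmult]
  exact abs_card_range_dvd_eval_sub_le f hd K

end

theorem card_range_coprime_eval_le (f : ℕ[X]) (K : ℕ) {P : ℕ} (hP : Squarefree P)
    (hroots : ∀ p, p.Prime → p ∣ P → rootCount f p ∈ Set.Ioo 0 p) {z : ℕ} (hz : 1 ≤ z) :
    (#{k ∈ range K | P.Coprime (f.eval k)} : ℝ) ≤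
      K / (∑ d ∈ P.divisors with d ≤ z, rootDensity f d) + z ^ 6 := by
  have hlevel : (1 : ℝ) ≤ (z : ℝ) ^ 2 := one_le_pow₀ (mod_cast hz)
  set s := polynomialSieve f K hP hroots hlevel
  have hdivisors : selbergDivisors s = {d ∈ P.divisors | d ≤ z} := by
    ext d
    simp only [selbergDivisors, mem_filter, s, polynomialSieve]
    rw [sq_le_sq₀ (Nat.cast_nonneg d) (Nat.cast_nonneg z), Nat.cast_le]
  have hdvd {d : ℕ} (hd : d ∈ {d ∈ P.divisors | d ≤ z}) : d ∣ P :=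
    Nat.dvd_of_mem_divisors (mem_filter.1 hd).1
  have hsum : ∑ d ∈ P.divisors with d ≤ z, rootDensity f d ≤ selbergSum s := by
    rw [selbergSum, hdivisors]
    exact sum_le_sum fun d hd ↦ nu_le_selbergTerms (s := s.toBoundingSieve) (hdvd hd)
  have hsum_pos : 0 < ∑ d ∈ P.divisors with d ≤ z, rootDensity f d :=
    sum_pos (fun d hd ↦ BoundingSieve.nu_pos_of_dvd_prodPrimes (s := s.toBoundingSieve) (hdvd hd))
      ⟨1, mem_filter.2 ⟨Nat.one_mem_divisors.2 hP.ne_zero, hz⟩⟩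
  calc (#{k ∈ range K | P.Coprime (f.eval k)} : ℝ)
      = s.siftedSum := (siftedSum_polynomialSieve f K hP hroots hlevel).symm
    _ ≤ K / selbergSum s + (∑ d ∈ P.divisors with d ≤ z, d * (rootDensity f d)⁻¹) ^ 2 := by
        rw [← hdivisors]
        exact siftedSum_le_div_selbergSum_add fun d hd ↦ abs_rem_polynomialSieve_le f K hP hroots
          hlevel (ne_zero_of_dvd_ne_zero hP.ne_zero hd)
    _ ≤ K / (∑ d ∈ P.divisors with d ≤ z, rootDensity f d) + (z ^ 3) ^ 2 := by
        have hnonneg : 0 ≤ ∑ d ∈ P.divisors with d ≤ z, d * (rootDensity f d)⁻¹ :=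
          sum_nonneg fun d _ ↦ by rw [rootDensity_apply]; positivity
        gcongr
        exact sum_divisors_mul_inv_rootDensity_le f P z
    _ = _ := by ring

end PolynomialSieve

section LinearPairSieve

open Polynomial

/-- The polynomial `X (m X + 1)`, whose value at `q` is coprime to all small primes when `q` and
`m q + 1` are both large primes. -/
noncomputable def linearPair (m : ℕ) : ℕ[X] := X * (C m * X + 1)

theorem eval_linearPair (m k : ℕ) : (linearPair m).eval k = k * (m * k + 1) := by
  simp [linearPair]

theorem rootCount_linearPair_mem_Ioo {m p : ℕ} (hm : Even m) (hp : p.Prime) :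
    rootCount (linearPair m) p ∈ Set.Ioo 0 p := by
  constructor
  · exact card_pos.2 ⟨0, mem_filter.2 ⟨mem_range.2 hp.pos, by simp [eval_linearPair]⟩⟩
  · obtain ⟨k, hkp, hk⟩ : ∃ k < p, ¬ p ∣ (linearPair m).eval k := by
      simp only [eval_linearPair, hp.dvd_mul, not_or]
      -- `1` is not a root unless `p ∣ m + 1`, in which case `-1` is not one.
      by_cases h : p ∣ m + 1
      · have hp2 : p ≠ 2 := by
          rintro rfl
          exact absurd h hm.add_one.not_two_dvd_nat
        refine ⟨p - 1, Nat.sub_lt hp.pos one_pos, fun hdvd ↦ ?_, fun hdvd ↦ ?_⟩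
        · exact absurd (Nat.le_of_dvd (by have := hp.two_le; omega) hdvd)
            (by have := hp.pos; omega)
        · have hsum : m * (p - 1) + 1 + (m + 1) = m * p + 2 := by
            obtain ⟨k, rfl⟩ := Nat.exists_eq_add_of_lt hp.pos
            simp only [zero_add, add_tsub_cancel_right]
            ring
          have hp_dvd_two : p ∣ 2 := (Nat.dvd_add_right (dvd_mul_left p m)).1
            (hsum ▸ dvd_add hdvd h)
          exact hp2 ((Nat.prime_dvd_prime_iff_eq hp Nat.prime_two).1 hp_dvd_two)
      · exact ⟨1, hp.one_lt, hp.not_dvd_one, by simpa using h⟩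
    calc rootCount (linearPair m) p < #(range p) :=
          card_lt_card (filter_ssubset.2 ⟨k, mem_range.2 hkp, hk⟩)
      _ = p := card_range p

-- A divisor `b` of `n` coprime to `m` gives the root `k` with `m k ≡ -1` modulo `b` and `k ≡ 0`
-- modulo `n / b`, and `b` is recovered from `k` as `gcd n (m k + 1)`.
theorem card_coprime_divisors_le_rootCount_linearPair (m : ℕ) {n : ℕ} (hn : Squarefree n) :
    #{b ∈ n.divisors | b.Coprime m} ≤ rootCount (linearPair m) n := by
  have hroot : ∀ b ∈ {b ∈ n.divisors | b.Coprime m},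
      ∃ k < n, n ∣ (linearPair m).eval k ∧ n.gcd (m * k + 1) = b := by
    intro b hb
    obtain ⟨hbn, hbm⟩ := mem_filter.1 hb
    obtain ⟨c, rfl⟩ := Nat.dvd_of_mem_divisors hbn
    have hbc : b.Coprime c := Nat.coprime_of_squarefree_mul hn
    have : NeZero b := ⟨left_ne_zero_of_mul hn.ne_zero⟩
    obtain ⟨v, hv⟩ : ∃ v, b ∣ m * v + 1 := by
      refine ⟨(-(m : ZMod b)⁻¹).val, (ZMod.natCast_eq_zero_iff _ _).1 ?_⟩
      simp [ZMod.coe_mul_inv_eq_one m hbm.symm]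
    obtain ⟨k, hkb, hkc⟩ := Nat.chineseRemainder hbc v 0
    set j := k % (b * c)
    have hjb : b ∣ m * j + 1 := by
      have hjv : j ≡ v [MOD b] := ((Nat.mod_modEq k _).of_mul_right c).trans hkb
      exact (((hjv.mul_left m).add_right 1).dvd_iff dvd_rfl).2 hv
    have hjc : c ∣ j := (((Nat.mod_modEq k _).of_mul_left b).trans hkc).dvd_iff dvd_rfl |>.2
      (dvd_zero c)
    refine ⟨j, Nat.mod_lt _ (Nat.pos_of_ne_zero hn.ne_zero), ?_, ?_⟩
    · rw [eval_linearPair, mul_comm b c]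
      exact mul_dvd_mul hjc hjb
    · have hcop : (m * j + 1).Coprime c :=
        Nat.Coprime.coprime_dvd_right hjc (by simp)
      rw [Nat.gcd_comm, hbc.gcd_mul, Nat.gcd_eq_right hjb, hcop, mul_one]
  choose! k hk_lt hk_root hk_gcd using hroot
  refine card_le_card_of_injOn k (fun b hb ↦ ?_) fun a ha b hb hab ↦ ?_
  · exact mem_filter.2 ⟨mem_range.2 (hk_lt b hb), hk_root b hb⟩
  · rw [← hk_gcd a ha, hab, hk_gcd b hb]

end LinearPairSieve

section HarmonicSums

theorem sum_le_sum_of_injOn {ι κ : Type*} {s : Finset ι} {t : Finset κ} {f : ι → ℝ} {g : κ → ℝ}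
    (e : ι → κ) (hmaps : Set.MapsTo e s t) (hinj : Set.InjOn e s) (hfg : ∀ i ∈ s, f i ≤ g (e i))
    (hg : ∀ j ∈ t, 0 ≤ g j) : ∑ i ∈ s, f i ≤ ∑ j ∈ t, g j := by
  calc ∑ i ∈ s, f i ≤ ∑ i ∈ s, g (e i) := sum_le_sum hfg
    _ = ∑ j ∈ s.image e, g j := (sum_image hinj).symm
    _ ≤ ∑ j ∈ t, g j :=
      sum_le_sum_of_subset_of_nonneg (image_subset_iff.2 hmaps) fun j hj _ ↦ hg j hj

theorem sum_Icc_inv_sq_le_two (N : ℕ) : ∑ c ∈ Icc 1 N, ((c : ℝ) ^ 2)⁻¹ ≤ 2 := by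
  have h := sum_Ioo_inv_sq_le (α := ℝ) 0 (N + 1)
  have hIoo : Ioo 0 (N + 1) = Icc 1 N := by
    ext c
    simp only [mem_Ioo, mem_Icc]
    omega
  simpa [hIoo] using h

theorem harmonic_eq_sum_Icc_inv (N : ℕ) : (harmonic N : ℝ) = ∑ n ∈ Icc 1 N, (n : ℝ)⁻¹ := by
  rw [harmonic_eq_sum_Icc]
  push_cast
  rfl

/-- The squarefree integers in `[1, N]`. -/
def squarefreeIcc (N : ℕ) : Finset ℕ := {a ∈ Icc 1 N | Squarefree a}

theorem mem_squarefreeIcc {a N : ℕ} : a ∈ squarefreeIcc N ↔ a ≤ N ∧ Squarefree a := by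
  simp only [squarefreeIcc, mem_filter, mem_Icc, and_congr_left_iff, and_iff_right_iff_imp]
  exact fun ha _ ↦ Nat.pos_of_ne_zero ha.ne_zero

theorem abundancyIndex_eq_sum_inv (m : ℕ) :
    (m.abundancyIndex : ℝ) = ∑ d ∈ m.divisors, (d : ℝ)⁻¹ := by
  rw [Nat.abundancyIndex, Rat.cast_div, Nat.cast_sum, Rat.cast_sum, sum_div,
    ← Nat.sum_div_divisors]
  refine sum_congr rfl fun d hd ↦ ?_
  have hdm := Nat.dvd_of_mem_divisors hd
  have hm : (m : ℝ) ≠ 0 := mod_cast (Nat.mem_divisors.1 hd).2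
  have hd0 : (d : ℝ) ≠ 0 := mod_cast (Nat.pos_of_mem_divisors hd).ne'
  push_cast [Nat.cast_div hdm hd0]
  field_simp

theorem abundancyIndex_nonneg (m : ℕ) : 0 ≤ (m.abundancyIndex : ℝ) := by
  rw [abundancyIndex_eq_sum_inv]
  positivity

theorem log_add_one_le_two_mul_sum_squarefreeIcc (N : ℕ) :
    log (N + 1) ≤ 2 * ∑ a ∈ squarefreeIcc N, (a : ℝ)⁻¹ := by
  have hdecomp : ∀ n ∈ Icc 1 N, ∃ x : ℕ × ℕ, x ∈ Icc 1 N ×ˢ squarefreeIcc N ∧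
      x.1 ^ 2 * x.2 = n := by
    intro n hn
    obtain ⟨hn, hnN⟩ := mem_Icc.1 hn
    obtain ⟨a, c, ha, hc, rfl, hsqf⟩ := Nat.sq_mul_squarefree_of_pos hn
    refine ⟨(c, a), mem_product.2 ⟨mem_Icc.2 ⟨hc, ?_⟩, mem_squarefreeIcc.2 ⟨?_, hsqf⟩⟩, rfl⟩
    · exact (Nat.le_self_pow two_ne_zero c).trans ((Nat.le_mul_of_pos_right _ ha).trans hnN)
    · exact (Nat.le_mul_of_pos_left a (pow_pos hc 2)).trans hnN
  choose! x hx hxn using hdecomp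
  calc log (N + 1) ≤ ∑ n ∈ Icc 1 N, (n : ℝ)⁻¹ := by
        rw [← harmonic_eq_sum_Icc_inv]
        exact_mod_cast log_add_one_le_harmonic N
    _ ≤ ∑ x ∈ Icc 1 N ×ˢ squarefreeIcc N, ((x.1 : ℝ) ^ 2)⁻¹ * (x.2 : ℝ)⁻¹ := by
        refine sum_le_sum_of_injOn x hx (fun m hm n hn hmn ↦ ?_) (fun n hn ↦ ?_)
          fun x _ ↦ by positivity
        · rw [← hxn m hm, hmn, hxn n hn]
        · rw [← mul_inv]
          exact_mod_cast (congrArg (fun k : ℕ ↦ (k : ℝ)⁻¹) (hxn n hn)).ge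
    _ = (∑ c ∈ Icc 1 N, ((c : ℝ) ^ 2)⁻¹) * ∑ a ∈ squarefreeIcc N, (a : ℝ)⁻¹ := by
        rw [sum_mul_sum, sum_product]
    _ ≤ 2 * ∑ a ∈ squarefreeIcc N, (a : ℝ)⁻¹ := by
        gcongr
        exact sum_Icc_inv_sq_le_two N

theorem sum_squarefreeIcc_le_abundancyIndex_mul {m : ℕ} (hm : m ≠ 0) (N : ℕ) :
    ∑ a ∈ squarefreeIcc N, (a : ℝ)⁻¹ ≤
      m.abundancyIndex * ∑ b ∈ squarefreeIcc N with b.Coprime m, (b : ℝ)⁻¹ := by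
  rw [abundancyIndex_eq_sum_inv, sum_mul_sum]
  calc ∑ a ∈ squarefreeIcc N, (a : ℝ)⁻¹
      ≤ ∑ x ∈ m.divisors ×ˢ {b ∈ squarefreeIcc N | b.Coprime m}, (x.1 : ℝ)⁻¹ * (x.2 : ℝ)⁻¹ := by
        refine sum_le_sum_of_injOn (fun a ↦ (a.gcd m, a / a.gcd m)) (fun a ha ↦ ?_)
          (fun a _ b _ hab ↦ ?_) (fun a _ ↦ ?_) fun x _ ↦ by positivity
        · obtain ⟨haN, hsqf⟩ := mem_squarefreeIcc.1 ha
          exact mem_product.2 ⟨Nat.mem_divisors.2 ⟨Nat.gcd_dvd_right a m, hm⟩, mem_filter.2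
            ⟨mem_squarefreeIcc.2 ⟨(Nat.div_le_self _ _).trans haN,
              hsqf.squarefree_of_dvd (Nat.div_dvd_of_dvd (Nat.gcd_dvd_left a m))⟩,
              Nat.coprime_div_gcd_of_squarefree hsqf hm⟩⟩
        · obtain ⟨hgcd, hquot⟩ := Prod.ext_iff.1 hab
          rw [← Nat.mul_div_cancel' (Nat.gcd_dvd_left a m),
            ← Nat.mul_div_cancel' (Nat.gcd_dvd_left b m)]
          exact congrArg₂ _ hgcd hquot
        · rw [← mul_inv, ← Nat.cast_mul, Nat.mul_div_cancel' (Nat.gcd_dvd_left a m)]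
    _ = _ := sum_product _ _ _

theorem sum_abundancyIndex_div_le (M : ℕ) :
    ∑ m ∈ Icc 1 M, (m.abundancyIndex : ℝ) / m ≤ 2 * (1 + log M) := by
  simp only [abundancyIndex_eq_sum_inv, sum_div]
  rw [sum_sigma']
  calc ∑ x ∈ (Icc 1 M).sigma Nat.divisors, (x.2 : ℝ)⁻¹ / x.1
      ≤ ∑ x ∈ Icc 1 M ×ˢ Icc 1 M, ((x.1 : ℝ) ^ 2)⁻¹ * (x.2 : ℝ)⁻¹ := by
        refine sum_le_sum_of_injOn (fun x ↦ (x.2, x.1 / x.2)) ?_ ?_ ?_ fun x _ ↦ by positivity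
        · rintro ⟨m, d⟩ hx
          obtain ⟨hm, hd⟩ := mem_sigma.1 hx
          have hmM := (mem_Icc.1 hm).2
          have hdm := Nat.divisor_le hd
          have hd0 := Nat.pos_of_mem_divisors hd
          exact mem_product.2 ⟨mem_Icc.2 ⟨hd0, hdm.trans hmM⟩, mem_Icc.2
            ⟨Nat.div_pos hdm hd0, (Nat.div_le_self _ _).trans hmM⟩⟩
        · rintro ⟨m, d⟩ hx ⟨n, e⟩ hy hxy
          obtain ⟨rfl, hquot⟩ := Prod.ext_iff.1 hxy
          have hdm := Nat.dvd_of_mem_divisors (mem_sigma.1 hx).2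
          have hdn := Nat.dvd_of_mem_divisors (mem_sigma.1 hy).2
          rw [Sigma.mk.injEq, heq_eq_eq, and_iff_left rfl]
          exact (Nat.div_left_inj hdm hdn).1 hquot
        · rintro ⟨m, d⟩ hx
          have hd := (mem_sigma.1 hx).2
          have hd0 : (d : ℝ) ≠ 0 := mod_cast (Nat.pos_of_mem_divisors hd).ne'
          rw [Nat.cast_div (Nat.dvd_of_mem_divisors hd) hd0]
          refine le_of_eq ?_
          field_simp
    _ = (∑ d ∈ Icc 1 M, ((d : ℝ) ^ 2)⁻¹) * harmonic M := by
        rw [harmonic_eq_sum_Icc_inv, sum_mul_sum, sum_product]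
    _ ≤ 2 * (1 + log M) := by
        gcongr
        · rw [harmonic_eq_sum_Icc_inv]
          positivity
        · exact sum_Icc_inv_sq_le_two M
        · exact_mod_cast harmonic_le_one_add_log M

theorem mul_eq_gcd_sq_mul_div_gcd (a b : ℕ) :
    a * b = a.gcd b ^ 2 * (a / a.gcd b * (b / a.gcd b)) := by
  calc a * b = a.gcd b * (a / a.gcd b) * (a.gcd b * (b / a.gcd b)) := by
        rw [Nat.mul_div_cancel' (Nat.gcd_dvd_left a b),
          Nat.mul_div_cancel' (Nat.gcd_dvd_right a b)]
    _ = _ := by ring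

theorem eq_and_eq_of_gcd_eq_of_div_gcd_eq {a b a' b' : ℕ} (hb : b ≠ 0) (hgcd : a.gcd b = a'.gcd b')
    (hmul : a / a.gcd b * (b / a.gcd b) = a' / a'.gcd b' * (b' / a'.gcd b'))
    (hquot : b / a.gcd b = b' / a'.gcd b') : a = a' ∧ b = b' := by
  have hpos : 0 < b / a.gcd b :=
    Nat.div_gcd_pos_of_pos_right a (Nat.pos_of_ne_zero hb)
  have hquot' : a / a.gcd b = a' / a'.gcd b' :=
    Nat.eq_of_mul_eq_mul_right hpos (hmul.trans (by rw [hquot]))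
  constructor
  · calc a = a.gcd b * (a / a.gcd b) := (Nat.mul_div_cancel' (Nat.gcd_dvd_left a b)).symm
      _ = a'.gcd b' * (a' / a'.gcd b') := by rw [hquot', hgcd]
      _ = a' := Nat.mul_div_cancel' (Nat.gcd_dvd_left a' b')
  · calc b = a.gcd b * (b / a.gcd b) := (Nat.mul_div_cancel' (Nat.gcd_dvd_right a b)).symm
      _ = a'.gcd b' * (b' / a'.gcd b') := by rw [hquot, hgcd]
      _ = b' := Nat.mul_div_cancel' (Nat.gcd_dvd_right a' b')

theorem gcd_mem_Icc_of_mem_squarefreeIcc {a N : ℕ} (ha : a ∈ squarefreeIcc N) (b : ℕ) :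
    a.gcd b ∈ Icc 1 N := by
  obtain ⟨haN, ha⟩ := mem_squarefreeIcc.1 ha
  have ha0 := Nat.pos_of_ne_zero ha.ne_zero
  exact mem_Icc.2 ⟨Nat.gcd_pos_of_pos_left b ha0, (Nat.gcd_le_left b ha0).trans haN⟩

theorem div_gcd_mul_div_gcd_mem_squarefreeIcc {a b N : ℕ} (ha : a ∈ squarefreeIcc N)
    (hb : b ∈ squarefreeIcc N) : a / a.gcd b * (b / a.gcd b) ∈ squarefreeIcc (N ^ 2) := by
  obtain ⟨haN, ha⟩ := mem_squarefreeIcc.1 ha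
  obtain ⟨hbN, hb⟩ := mem_squarefreeIcc.1 hb
  refine mem_squarefreeIcc.2 ⟨?_, (Nat.squarefree_mul (Nat.coprime_div_gcd_div_gcd
    (Nat.gcd_pos_of_pos_left b (Nat.pos_of_ne_zero ha.ne_zero)))).2
      ⟨ha.squarefree_of_dvd (Nat.div_dvd_of_dvd (Nat.gcd_dvd_left a b)),
        hb.squarefree_of_dvd (Nat.div_dvd_of_dvd (Nat.gcd_dvd_right a b))⟩⟩
  rw [sq]
  exact Nat.mul_le_mul ((Nat.div_le_self _ _).trans haN) ((Nat.div_le_self _ _).trans hbN)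

-- The pair `(a, b)` is determined by `g = gcd a b`, `n = (a / g) * (b / g)` and the divisor `b / g`
-- of `n`, and `a * b = g ^ 2 * n`; the factor `2` bounds `∑ g⁻²`.
theorem sum_mul_sum_squarefreeIcc_le (m N : ℕ) :
    (∑ a ∈ squarefreeIcc N, (a : ℝ)⁻¹) * ∑ b ∈ squarefreeIcc N with b.Coprime m, (b : ℝ)⁻¹ ≤
      2 * ∑ n ∈ squarefreeIcc (N ^ 2), (#{b ∈ n.divisors | b.Coprime m} : ℝ) / n := by
  rw [sum_mul_sum]
  calc ∑ a ∈ squarefreeIcc N, ∑ b ∈ squarefreeIcc N with b.Coprime m, (a : ℝ)⁻¹ * (b : ℝ)⁻¹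
      = ∑ x ∈ squarefreeIcc N ×ˢ {b ∈ squarefreeIcc N | b.Coprime m}, (x.1 : ℝ)⁻¹ * (x.2 : ℝ)⁻¹ :=
        (sum_product' _ _ fun a b : ℕ ↦ (a : ℝ)⁻¹ * (b : ℝ)⁻¹).symm
    _ ≤ ∑ x ∈ Icc 1 N ×ˢ (squarefreeIcc (N ^ 2)).sigma fun n ↦ {b ∈ n.divisors | b.Coprime m},
          ((x.1 : ℝ) ^ 2)⁻¹ * (x.2.1 : ℝ)⁻¹ := by
        refine sum_le_sum_of_injOn (fun x ↦ (x.1.gcd x.2,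
          ⟨x.1 / x.1.gcd x.2 * (x.2 / x.1.gcd x.2), x.2 / x.1.gcd x.2⟩)) ?_ ?_ ?_
          fun x _ ↦ by positivity
        · rintro ⟨a, b⟩ hx
          obtain ⟨ha, hb⟩ := mem_product.1 hx
          obtain ⟨hb, hbm⟩ := mem_filter.1 hb
          have hn := div_gcd_mul_div_gcd_mem_squarefreeIcc ha hb
          exact mem_product.2 ⟨gcd_mem_Icc_of_mem_squarefreeIcc ha b, mem_sigma.2 ⟨hn, mem_filter.2
            ⟨Nat.mem_divisors.2 ⟨dvd_mul_left _ _, (mem_squarefreeIcc.1 hn).2.ne_zero⟩,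
              hbm.of_dvd_left (Nat.div_dvd_of_dvd (Nat.gcd_dvd_right a b))⟩⟩⟩
        · rintro ⟨a, b⟩ hx ⟨a', b'⟩ - hxy
          simp only [Prod.mk.injEq, Sigma.mk.injEq, heq_eq_eq] at hxy ⊢
          have hb := (mem_squarefreeIcc.1 (mem_filter.1 (mem_product.1 hx).2).1).2.ne_zero
          exact eq_and_eq_of_gcd_eq_of_div_gcd_eq hb hxy.1 hxy.2.1 hxy.2.2
        · rintro ⟨a, b⟩ -
          rw [← mul_inv, ← mul_inv]
          refine (congrArg (·⁻¹) ?_).le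
          exact_mod_cast mul_eq_gcd_sq_mul_div_gcd a b
    _ = (∑ c ∈ Icc 1 N, ((c : ℝ) ^ 2)⁻¹) *
          ∑ n ∈ squarefreeIcc (N ^ 2), (#{b ∈ n.divisors | b.Coprime m} : ℝ) / n := by
        rw [sum_product, sum_mul]
        refine sum_congr rfl fun c _ ↦ ?_
        simp only [sum_sigma, sum_const, nsmul_eq_mul, mul_sum]
        exact sum_congr rfl fun n _ ↦ by ring
    _ ≤ 2 * ∑ n ∈ squarefreeIcc (N ^ 2), (#{b ∈ n.divisors | b.Coprime m} : ℝ) / n := by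
        gcongr
        exact sum_Icc_inv_sq_le_two N

end HarmonicSums

section RoughShiftedPrimes

theorem sq_log_le_sum_rootDensity_linearPair {m : ℕ} (hm : m ≠ 0) (l : ℕ) :
    log (l + 1) ^ 2 ≤
      8 * m.abundancyIndex * ∑ n ∈ squarefreeIcc (l ^ 2), rootDensity (linearPair m) n := by
  set A := ∑ a ∈ squarefreeIcc l, (a : ℝ)⁻¹
  set B := ∑ b ∈ squarefreeIcc l with b.Coprime m, (b : ℝ)⁻¹
  have : 0 ≤ A := by positivity
  have hm0 := abundancyIndex_nonneg m
  calc log (l + 1) ^ 2 ≤ (2 * A) ^ 2 := by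
        gcongr
        · exact log_nonneg (by simp)
        · exact log_add_one_le_two_mul_sum_squarefreeIcc l
    _ = 4 * (A * A) := by ring
    _ ≤ 4 * (A * (m.abundancyIndex * B)) := by
        gcongr
        exact sum_squarefreeIcc_le_abundancyIndex_mul hm l
    _ = 4 * m.abundancyIndex * (A * B) := by ring
    _ ≤ 4 * m.abundancyIndex *
          (2 * ∑ n ∈ squarefreeIcc (l ^ 2), (#{b ∈ n.divisors | b.Coprime m} : ℝ) / n) := by
        exact mul_le_mul_of_nonneg_left (sum_mul_sum_squarefreeIcc_le m l) (by positivity)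
    _ ≤ 4 * m.abundancyIndex *
          (2 * ∑ n ∈ squarefreeIcc (l ^ 2), rootDensity (linearPair m) n) := by
        gcongr with n hn
        rw [rootDensity_apply]
        gcongr
        exact card_coprime_divisors_le_rootCount_linearPair m (mem_squarefreeIcc.1 hn).2
    _ = _ := by ring

theorem card_range_coprime_linearPair_le {m : ℕ} (hm : m ≠ 0) (hmeven : Even m) {l : ℕ}
    (hl : 1 ≤ l) (K : ℕ) :
    (#{n ∈ range K | (primorial (l ^ 2)).Coprime (n * (m * n + 1))} : ℝ) ≤
      8 * K * m.abundancyIndex / log (l + 1) ^ 2 + l ^ 12 := by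
  have hlog : 0 < log (l + 1) := log_pos (by exact_mod_cast Nat.lt_add_one_of_le hl)
  have hP := squarefree_primorial (l ^ 2)
  have hsieve := card_range_coprime_eval_le (linearPair m) K hP
    (fun p hp _ ↦ rootCount_linearPair_mem_Ioo hmeven hp) (one_le_pow₀ hl : 1 ≤ l ^ 2)
  have hsub : squarefreeIcc (l ^ 2) ⊆ {d ∈ (primorial (l ^ 2)).divisors | d ≤ l ^ 2} := by
    intro d hd
    obtain ⟨hdl, hd⟩ := mem_squarefreeIcc.1 hd
    have hdP := hd.dvd_primorial.trans (primorial_dvd_primorial hdl)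
    exact mem_filter.2 ⟨Nat.mem_divisors.2 ⟨hdP, hP.ne_zero⟩, hdl⟩
  set S := ∑ d ∈ (primorial (l ^ 2)).divisors with d ≤ l ^ 2, rootDensity (linearPair m) d
  have hS : log (l + 1) ^ 2 ≤ 8 * m.abundancyIndex * S := by
    refine (sq_log_le_sum_rootDensity_linearPair hm l).trans ?_
    have := abundancyIndex_nonneg m
    gcongr
    refine sum_le_sum_of_subset_of_nonneg hsub fun d _ _ ↦ ?_
    rw [rootDensity_apply]
    positivity
  have hS0 : 0 < S := by
    have := (pow_pos hlog 2).trans_le hS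
    exact pos_of_mul_pos_right this (by have := abundancyIndex_nonneg m; positivity)
  calc (#{n ∈ range K | (primorial (l ^ 2)).Coprime (n * (m * n + 1))} : ℝ)
      ≤ K / S + (l ^ 2 : ℕ) ^ 6 := by simpa only [eval_linearPair] using hsieve
    _ ≤ 8 * K * m.abundancyIndex / log (l + 1) ^ 2 + (l ^ 2 : ℕ) ^ 6 := by
        refine add_le_add ?_ le_rfl
        rw [div_le_div_iff₀ hS0 (by positivity)]
        calc K * log (l + 1) ^ 2 ≤ K * (8 * m.abundancyIndex * S) := by gcongr
          _ = 8 * K * m.abundancyIndex * S := by ring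
    _ = 8 * K * m.abundancyIndex / log (l + 1) ^ 2 + l ^ 12 := by
        push_cast
        ring

theorem card_range_floor_coprime_linearPair_le {m : ℕ} (hm : m ≠ 0) (hmeven : Even m) {l : ℕ}
    (hl : 1 ≤ l) {z : ℝ} (hmz : m ≤ z) :
    (#{n ∈ range (⌊z / m⌋₊ + 1) | (primorial (l ^ 2)).Coprime (n * (m * n + 1))} : ℝ) ≤
      16 * z / log (l + 1) ^ 2 * (m.abundancyIndex / m) + l ^ 12 := by
  have hm0 : (0 : ℝ) < m := by positivity
  have hfloor : ((⌊z / m⌋₊ + 1 : ℕ) : ℝ) ≤ 2 * (z / m) := by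
    push_cast
    linarith [Nat.floor_le (div_nonneg (hm0.le.trans hmz) hm0.le), (one_le_div hm0).2 hmz]
  have hσ := abundancyIndex_nonneg m
  calc _ ≤ 8 * ((⌊z / m⌋₊ + 1 : ℕ) : ℝ) * m.abundancyIndex / log (l + 1) ^ 2 + l ^ 12 :=
        card_range_coprime_linearPair_le hm hmeven hl _
    _ ≤ 8 * (2 * (z / m)) * m.abundancyIndex / log (l + 1) ^ 2 + l ^ 12 := by gcongr
    _ = 16 * z / log (l + 1) ^ 2 * (m.abundancyIndex / m) + l ^ 12 := by ring

theorem exists_mem_primeFactors_lt_of_lt_Pplus {n : ℕ} {y : ℝ} (hy : 1 ≤ y) (hn : y < Pplus n) :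
    ∃ q ∈ n.primeFactors, y < q := by
  contrapose! hn
  unfold Pplus
  split_ifs
  · exact_mod_cast hy
  · have hsup : n.primeFactors.sup id ≤ ⌊y⌋₊ := Finset.sup_le fun q hq ↦ Nat.le_floor (hn q hq)
    exact (Nat.cast_le.2 hsup).trans (Nat.floor_le (zero_le_one.trans hy))

/-- The primes `p ≤ z` for which every prime factor of `p - 1` is at most `y`. -/
noncomputable def smoothShiftedPrimes (y z : ℝ) : Finset ℕ :=
  {p ∈ range (⌊z⌋₊ + 1) | p.Prime ∧ (Pplus (p - 1) : ℝ) ≤ y}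

/-- The primes `p ≤ z` for which `p - 1` has a prime factor exceeding `y`. -/
noncomputable def roughShiftedPrimes (y z : ℝ) : Finset ℕ :=
  {p ∈ range (⌊z⌋₊ + 1) | p.Prime ∧ ¬(Pplus (p - 1) : ℝ) ≤ y}

theorem card_smoothShiftedPrimes_add_card_roughShiftedPrimes (y z : ℝ) :
    #(smoothShiftedPrimes y z) + #(roughShiftedPrimes y z) = Nat.primeCounting ⌊z⌋₊ := by
  rw [Nat.primeCounting, Nat.primeCounting', Nat.count_eq_card_filter_range, smoothShiftedPrimes,
    roughShiftedPrimes, ← filter_filter, ← filter_filter, card_filter_add_card_filter_not]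

theorem exists_eq_mul_add_one_of_mem_roughShiftedPrimes {y z : ℝ} (hy : 2 ≤ y) {p : ℕ}
    (hp : p ∈ roughShiftedPrimes y z) :
    ∃ m q : ℕ, p = m * q + 1 ∧ m ≠ 0 ∧ Even m ∧ q.Prime ∧ y < q ∧ m * q ≤ z := by
  obtain ⟨hpz, hp, hrough⟩ := mem_filter.1 hp
  obtain ⟨q, hq, hyq⟩ :=
    exists_mem_primeFactors_lt_of_lt_Pplus (one_le_two.trans hy) (not_le.1 hrough)
  obtain ⟨hq, ⟨m, hm⟩, hp1⟩ := Nat.mem_primeFactors.1 hq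
  have hpm : p = m * q + 1 := by
    rw [mul_comm, ← hm, Nat.sub_add_cancel hp.one_le]
  have hm0 : m ≠ 0 := right_ne_zero_of_mul (hm ▸ hp1)
  have hq2 : 2 < q := by exact_mod_cast hy.trans_lt hyq
  have hmeven : Even m := by
    have hp2 : 2 < p := hpm ▸ Nat.lt_add_one_of_le (hq2.le.trans
      (Nat.le_mul_of_pos_left q (Nat.pos_of_ne_zero hm0)))
    have heven : Even (m * q) := by
      simpa [hpm, parity_simps] using hp.odd_of_ne_two hp2.ne'
    exact (Nat.even_mul.1 heven).resolve_right
      (Nat.not_even_iff_odd.2 (hq.odd_of_ne_two hq2.ne'))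
  refine ⟨m, q, hpm, hm0, hmeven, hq, hyq, ?_⟩
  have hle : m * q ≤ ⌊z⌋₊ := by
    have := mem_range.1 hpz
    lia
  exact_mod_cast (Nat.le_floor_iff' (mul_ne_zero hm0 hq.ne_zero)).1 hle

theorem coprime_primorial_of_prime_of_lt {p N : ℕ} (hp : p.Prime) (hN : N < p) :
    (primorial N).Coprime p :=
  (hp.coprime_iff_not_dvd.2 fun h ↦ hN.not_ge (hp.dvd_primorial_iff.1 h)).symm

theorem card_roughShiftedPrimes_le_sum {y z : ℝ} (hy : 2 ≤ y) {N : ℕ} (hN : N ≤ y) :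
    #(roughShiftedPrimes y z) ≤ ∑ m ∈ Icc 1 ⌊z / y⌋₊ with Even m,
      #{n ∈ range (⌊z / m⌋₊ + 1) | (primorial N).Coprime (n * (m * n + 1))} := by
  have hsub : roughShiftedPrimes y z ⊆ ({m ∈ Icc 1 ⌊z / y⌋₊ | Even m}).biUnion fun m ↦
      ({n ∈ range (⌊z / m⌋₊ + 1) | (primorial N).Coprime (n * (m * n + 1))}).image
        fun n ↦ m * n + 1 := by
    intro p hp
    obtain ⟨m, q, rfl, hm0, hmeven, hq, hyq, hmqz⟩ :=
      exists_eq_mul_add_one_of_mem_roughShiftedPrimes hy hp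
    have hm : (0 : ℝ) < m := by positivity
    have hNq : N < q := by exact_mod_cast hN.trans_lt hyq
    refine mem_biUnion.2 ⟨m, mem_filter.2 ⟨mem_Icc.2 ⟨Nat.pos_of_ne_zero hm0, Nat.le_floor ?_⟩,
      hmeven⟩, mem_image_of_mem (fun n ↦ m * n + 1) (mem_filter.2 ⟨mem_range.2
        (Nat.lt_add_one_of_le (Nat.le_floor ((le_div_iff₀' hm).2 hmqz))), ?_⟩)⟩
    · exact (le_div_iff₀ (by linarith)).2 ((mul_le_mul_of_nonneg_left hyq.le hm.le).trans hmqz)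
    · have hqp : q < m * q + 1 :=
        Nat.lt_add_one_of_le (Nat.le_mul_of_pos_left q (Nat.pos_of_ne_zero hm0))
      exact (coprime_primorial_of_prime_of_lt hq hNq).mul_right
        (coprime_primorial_of_prime_of_lt (mem_filter.1 hp).2.1 (hNq.trans hqp))
  exact (card_le_card hsub).trans (card_biUnion_le.trans (sum_le_sum fun m _ ↦ card_image_le))

theorem card_roughShiftedPrimes_le {y z : ℝ} (hy : 2 ≤ y) (hyz : y ≤ z) {l : ℕ} (hl : 1 ≤ l)
    (hly : (l : ℝ) ^ 2 ≤ y) :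
    (#(roughShiftedPrimes y z) : ℝ) ≤
      32 * z * (1 + log (z / y)) / log (l + 1) ^ 2 + z / y * l ^ 12 := by
  have hy0 : 0 < y := two_pos.trans_le hy
  have hz0 : 0 < z := hy0.trans_le hyz
  have hM : 1 ≤ ⌊z / y⌋₊ := Nat.le_floor (by simpa using (one_le_div hy0).2 hyz)
  have hMle : (⌊z / y⌋₊ : ℝ) ≤ z / y := Nat.floor_le (by positivity)
  have hterm : ∀ m ∈ {m ∈ Icc 1 ⌊z / y⌋₊ | Even m},
      (#{n ∈ range (⌊z / m⌋₊ + 1) | (primorial (l ^ 2)).Coprime (n * (m * n + 1))} : ℝ) ≤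
        16 * z / log (l + 1) ^ 2 * (m.abundancyIndex / m) + l ^ 12 := by
    intro m hm
    obtain ⟨hm, hmeven⟩ := mem_filter.1 hm
    obtain ⟨hm1, hmM⟩ := mem_Icc.1 hm
    have hmz : m ≤ z :=
      (Nat.cast_le.2 hmM).trans (hMle.trans (div_le_self hz0.le (one_le_two.trans hy)))
    exact card_range_floor_coprime_linearPair_le (Nat.one_le_iff_ne_zero.1 hm1) hmeven hl hmz
  calc (#(roughShiftedPrimes y z) : ℝ)
      ≤ ∑ m ∈ Icc 1 ⌊z / y⌋₊ with Even m,
          (#{n ∈ range (⌊z / m⌋₊ + 1) | (primorial (l ^ 2)).Coprime (n * (m * n + 1))} : ℝ) :=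
        mod_cast card_roughShiftedPrimes_le_sum hy (N := l ^ 2) (by exact_mod_cast hly)
    _ ≤ ∑ m ∈ Icc 1 ⌊z / y⌋₊ with Even m,
          (16 * z / log (l + 1) ^ 2 * (m.abundancyIndex / m) + l ^ 12) :=
        sum_le_sum hterm
    _ ≤ ∑ m ∈ Icc 1 ⌊z / y⌋₊,
          (16 * z / log (l + 1) ^ 2 * (m.abundancyIndex / m) + l ^ 12) := by
        refine sum_le_sum_of_subset_of_nonneg (filter_subset _ _) fun m _ _ ↦ ?_
        have := abundancyIndex_nonneg m
        positivity
    _ = 16 * z / log (l + 1) ^ 2 * (∑ m ∈ Icc 1 ⌊z / y⌋₊, (m.abundancyIndex : ℝ) / m) +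
          ⌊z / y⌋₊ * l ^ 12 := by
        rw [sum_add_distrib, ← mul_sum, sum_const, Nat.card_Icc, Nat.add_sub_cancel, nsmul_eq_mul]
    _ ≤ 16 * z / log (l + 1) ^ 2 * (2 * (1 + log (z / y))) + z / y * l ^ 12 := by
        gcongr
        refine (sum_abundancyIndex_div_le _).trans ?_
        gcongr
    _ = 32 * z * (1 + log (z / y)) / log (l + 1) ^ 2 + z / y * l ^ 12 := by ring

end RoughShiftedPrimes

section Asymptotics

open Filter

theorem exists_sieve_level {y : ℝ} (hy : 1 ≤ y) :
    ∃ l : ℕ, 1 ≤ l ∧ (l : ℝ) ^ 2 ≤ y ∧ (l : ℝ) ^ 12 ≤ √y ∧ log y / 24 ≤ log (l + 1) := by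
  have hy0 : 0 < y := zero_lt_one.trans_le hy
  set t : ℝ := y ^ (1 / 24 : ℝ)
  have ht : 1 ≤ t := one_le_rpow hy (by norm_num)
  have ht24 : t ^ 24 = y := by
    rw [← rpow_natCast, ← rpow_mul hy0.le]
    norm_num
  have ht12 : t ^ 12 = √y := by
    rw [← rpow_natCast, ← rpow_mul hy0.le, sqrt_eq_rpow]
    norm_num
  have hfloor : (⌊t⌋₊ : ℝ) ≤ t := Nat.floor_le (zero_le_one.trans ht)
  refine ⟨⌊t⌋₊, Nat.le_floor (by exact_mod_cast ht), ?_, ?_, ?_⟩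
  · calc (⌊t⌋₊ : ℝ) ^ 2 ≤ t ^ 2 := by gcongr
      _ ≤ t ^ 24 := pow_le_pow_right₀ ht (by norm_num)
      _ = y := ht24
  · rw [← ht12]
    gcongr
  · calc log y / 24 = log t := by rw [log_rpow hy0, one_div_mul_eq_div]
      _ ≤ log (⌊t⌋₊ + 1) := log_le_log (by positivity) (Nat.lt_floor_add_one t).le

theorem card_roughShiftedPrimes_le_mul_div_sq_log_add {y z : ℝ} (hy : 2 ≤ y) (hyz : y ≤ z) :
    (#(roughShiftedPrimes y z) : ℝ) ≤
      18432 * z * (1 + log (z / y)) / log y ^ 2 + z / √y := by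
  obtain ⟨l, hl, hly, hl12, hlog⟩ := exists_sieve_level (one_le_two.trans hy)
  have hy0 : 0 < y := two_pos.trans_le hy
  have hz0 : 0 < z := hy0.trans_le hyz
  have hL : 0 < log y := log_pos (one_lt_two.trans_le hy)
  have hzy : 0 ≤ log (z / y) := log_nonneg ((one_le_div hy0).2 hyz)
  calc (#(roughShiftedPrimes y z) : ℝ)
      ≤ 32 * z * (1 + log (z / y)) / log (l + 1) ^ 2 + z / y * l ^ 12 :=
        card_roughShiftedPrimes_le hy hyz hl hly
    _ ≤ 32 * z * (1 + log (z / y)) / (log y / 24) ^ 2 + z / y * √y := by gcongr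
    _ = 18432 * z * (1 + log (z / y)) / log y ^ 2 + z / √y := by
        rw [div_mul_eq_mul_div, mul_div_assoc z, sqrt_div_self', mul_one_div]
        ring

theorem eventually_card_roughShiftedPrimes_le {ρ : ℝ} (hρ : 0 < ρ) :
    ∀ᶠ y in atTop, (#(roughShiftedPrimes y (y ^ (1 + ρ))) : ℝ) ≤
      20000 * ρ * y ^ (1 + ρ) / log y := by
  have hlog_sq : ∀ᶠ y in atTop, log y ^ 2 ≤ √y := by
    filter_upwards [(isLittleO_log_rpow_rpow_atTop 2 one_half_pos).def one_pos,
      eventually_ge_atTop 0] with y hy hy0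
    simpa [sqrt_eq_rpow, abs_of_nonneg (rpow_nonneg hy0 _)] using hy
  filter_upwards [hlog_sq, eventually_ge_atTop 2,
    tendsto_log_atTop.eventually_ge_atTop (18433 / (1568 * ρ))] with y hsq hy hL
  have hy0 : 0 < y := two_pos.trans_le hy
  have hL0 : 0 < log y := log_pos (one_lt_two.trans_le hy)
  have hyz : y ≤ y ^ (1 + ρ) := self_le_rpow_of_one_le (one_le_two.trans hy) (by linarith)
  have hlog : log (y ^ (1 + ρ) / y) = ρ * log y := by
    rw [log_div (by positivity) hy0.ne', log_rpow hy0]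
    ring
  rw [div_le_iff₀ (by positivity)] at hL
  calc (#(roughShiftedPrimes y (y ^ (1 + ρ))) : ℝ)
      ≤ 18432 * y ^ (1 + ρ) * (1 + ρ * log y) / log y ^ 2 + y ^ (1 + ρ) / √y :=
        hlog ▸ card_roughShiftedPrimes_le_mul_div_sq_log_add hy hyz
    _ ≤ 18432 * y ^ (1 + ρ) * (1 + ρ * log y) / log y ^ 2 + y ^ (1 + ρ) / log y ^ 2 := by
        gcongr
    _ = y ^ (1 + ρ) * (18433 + 18432 * (ρ * log y)) / log y ^ 2 := by ring
    _ ≤ y ^ (1 + ρ) * (20000 * (ρ * log y)) / log y ^ 2 := by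
        gcongr
        linarith
    _ = 20000 * ρ * y ^ (1 + ρ) / log y := by
        field_simp

theorem eventually_div_two_mul_log_le_primeCounting :
    ∀ᶠ z : ℝ in atTop, z / (2 * log z) ≤ Nat.primeCounting ⌊z⌋₊ := by
  have hlog : ∀ᶠ z : ℝ in atTop, log (z + 2) ≤ 1 / 10 * (z + 2) := by
    filter_upwards [(tendsto_atTop_add_const_right atTop 2 tendsto_id).eventually
      (isLittleO_log_id_atTop.def (by norm_num : (0 : ℝ) < 1 / 10)), eventually_ge_atTop 0]
      with z hz hz0
    simpa [abs_of_nonneg, hz0, add_nonneg] using (le_abs_self _).trans hz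
  filter_upwards [hlog, eventually_ge_atTop 11] with z hz hz11
  have hL : 0 < log z := log_pos (by linarith)
  refine le_trans ?_ (Chebyshev.pi_ge' (by linarith : 1 < z))
  rw [← div_div]
  gcongr
  nlinarith [log_two_gt_d9]

theorem eventually_lt_card_smoothShiftedPrimes {ρ c : ℝ} (hρ : 0 < ρ)
    (hc : c < 1 / (2 * (1 + ρ)) - 20000 * ρ) :
    ∀ᶠ y in atTop, c * y ^ (1 + ρ) / log y < #(smoothShiftedPrimes y (y ^ (1 + ρ))) := by
  filter_upwards [eventually_card_roughShiftedPrimes_le hρ, eventually_gt_atTop 1,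
    (tendsto_rpow_atTop (by linarith : 0 < 1 + ρ)).eventually
      eventually_div_two_mul_log_le_primeCounting] with y hrough hy hprime
  have hL : 0 < log y := log_pos hy
  have hsplit : (#(smoothShiftedPrimes y (y ^ (1 + ρ))) : ℝ) +
      #(roughShiftedPrimes y (y ^ (1 + ρ))) = Nat.primeCounting ⌊y ^ (1 + ρ)⌋₊ :=
    mod_cast card_smoothShiftedPrimes_add_card_roughShiftedPrimes y (y ^ (1 + ρ))
  rw [log_rpow (by linarith)] at hprime
  calc c * y ^ (1 + ρ) / log y
      < (1 / (2 * (1 + ρ)) - 20000 * ρ) * y ^ (1 + ρ) / log y := by gcongr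
    _ = y ^ (1 + ρ) / (2 * ((1 + ρ) * log y)) - 20000 * ρ * y ^ (1 + ρ) / log y := by
        field_simp
    _ ≤ #(smoothShiftedPrimes y (y ^ (1 + ρ))) := by linarith

end Asymptotics

/-- Erdős (1935): there exist `ρ, c_ρ > 0` such that for all large `x`,
`#{p ≤ (log x)^{1+ρ} : p prime, P⁺(p−1) ≤ log x} > c_ρ·(log x)^{1+ρ}/log log x`. -/
theorem erdos_shifted_primes_small_factor :
    ∃ ρ : ℝ, 0 < ρ ∧ ∃ cρ : ℝ, 0 < cρ ∧ ∃ x₀ : ℝ, ∀ x ≥ x₀,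
      ((((Finset.range (⌊(Real.log x) ^ (1 + ρ)⌋₊ + 1)).filter
          (fun p : ℕ => p.Prime ∧ (Pplus (p - 1) : ℝ) ≤ Real.log x)).card : ℝ)) >
        cρ * (Real.log x) ^ (1 + ρ) / Real.log (Real.log x) := by
  have hlarge : ∀ᶠ y in Filter.atTop, 1 / 5 * y ^ (1 + 1 / 10 ^ 5 : ℝ) / log y <
      #(smoothShiftedPrimes y (y ^ (1 + 1 / 10 ^ 5 : ℝ))) :=
    eventually_lt_card_smoothShiftedPrimes (by norm_num) (by norm_num)
  exact ⟨1 / 10 ^ 5, by norm_num, 1 / 5, by norm_num,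
    Filter.eventually_atTop.1 (tendsto_log_atTop.eventually hlarge)⟩
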